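/- Let n ≥ 1 and t_c > 0. Let c : ℝ → ℝⁿ be Lipschitz on [0, t_c] with constant L_c ≥ 0 and r : ℝ → ℝ be Lipschitz on [0, t_c] with constant L_r ≥ 0. Let ε ≥ 0 and η̂ ∈ ℝ with η̂ + (L_c + L_r)·ε ≤ 0, and let r_d > 0. Let S, T, Y ⊆ ℝⁿ and let U ⊆ ℝⁿ be an open set. Suppose there are c_S, c_T, c_Y ∈ ℝⁿ and r_S, r_T, r_Y > 0 with B(c_S, r_S) ⊆ S, B(c_T, r_T) ⊆ T, B(c_Y, r_Y) ⊆ Y, and suppose: (a) c(0) = c_S and r(0) = r_S; (b) c(t_c) = c_T and r(t_c) = r_T; and there is a set F ⊆ [0, t_c] of sample times such that for every t ∈ [0, t_c] there exists s ∈ F with |t − s| ≤ ε, and for every s ∈ F: (c) ‖c(s) − c_Y‖ + r(s) − r_Y ≤ η̂; (d) −r(s) + r_d ≤ η̂; (e) −d(c(s), U) + r(s) ≤ η̂. Then for all t ∈ [0, t_c]: r(t) ≥ r_d > 0; B(c(0), r(0)) ⊆ S; B(c(t_c), r(t_c)) ⊆ T; and B(c(t), r(t)) ⊆ Y \ U.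 -/

import Mathlib

open Metric Set

/-!
Each sampled constraint bounds a real function of time that is `(Lc + Lr)`-Lipschitz, because the
distance to a point and the distance to a set are `1`-Lipschitz. Moving from an arbitrary time to
a sample at distance at most `ε` therefore costs at most `(Lc + Lr) * ε`, which the margin absorbs,
so every constraint holds without the margin at all times. The resulting inequality
`r t ≤ infDist (c t) U` only keeps the open ball away from `U`; since `r t > 0`, the closed ball is
the closure of the open one, and an open `U` disjoint from a set is disjoint from its closure.
-/

open scoped NNReal

section Sampling

variable {α E : Type*} [PseudoMetricSpace α] [PseudoMetricSpace E] {I F : Set α}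

theorem le_add_mul_of_isCover_of_lipschitzOnWith {f : α → ℝ} {K ε : ℝ≥0} {b : ℝ}
    (hf : LipschitzOnWith K f I) (hFI : F ⊆ I) (hcover : IsCover ε I F)
    (hsample : ∀ s ∈ F, f s ≤ b) {t : α} (ht : t ∈ I) : f t ≤ b + K * ε := by
  obtain ⟨s, hs, hts⟩ := mem_iUnion₂.1 (hcover.subset_iUnion_closedBall ht)
  calc
    f t ≤ f s + K * dist t s := hf.le_add_mul ht (hFI hs)
    _ ≤ b + K * ε := by gcongr; exacts [hsample s hs, hts]

variable {c : α → E} {r : α → ℝ} {Kc Kr : ℝ≥0}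

theorem lipschitzOnWith_dist_add (hc : LipschitzOnWith Kc c I) (hr : LipschitzOnWith Kr r I)
    (y : E) : LipschitzOnWith (Kc + Kr) (fun t ↦ dist (c t) y + r t) I := by
  have hdist : LipschitzOnWith (1 * Kc) (fun t ↦ dist (c t) y) I :=
    (LipschitzWith.dist_left y).comp_lipschitzOnWith hc
  simpa only [one_mul] using hdist.add hr

theorem lipschitzOnWith_neg_infDist_add (hc : LipschitzOnWith Kc c I)
    (hr : LipschitzOnWith Kr r I) (U : Set E) :
    LipschitzOnWith (Kc + Kr) (fun t ↦ -infDist (c t) U + r t) I := by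
  have hinfDist : LipschitzOnWith (1 * Kc) (fun t ↦ infDist (c t) U) I :=
    (lipschitz_infDist_pt U).comp_lipschitzOnWith hc
  simpa only [one_mul, Pi.neg_apply] using hinfDist.neg.add hr

end Sampling

section NormedSpace

variable {E : Type*} [SeminormedAddCommGroup E] [NormedSpace ℝ E]

theorem disjoint_closedBall_of_le_infDist {U : Set E} {x : E} {ρ : ℝ} (hU : IsOpen U)
    (hρ : ρ ≠ 0) (hle : ρ ≤ infDist x U) : Disjoint (closedBall x ρ) U := by
  rw [← closure_ball x hρ]
  exact (disjoint_ball_infDist.mono_left (ball_subset_ball hle)).closure_left hU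

theorem pinstt_validity_general {tc : ℝ} {c : ℝ → E} {r : ℝ → ℝ}
    {Lc Lr : ℝ} (hLc : 0 ≤ Lc) (hLr : 0 ≤ Lr)
    (hLipc : ∀ s ∈ Icc 0 tc, ∀ t ∈ Icc 0 tc, ‖c s - c t‖ ≤ Lc * |s - t|)
    (hLipr : ∀ s ∈ Icc 0 tc, ∀ t ∈ Icc 0 tc, |r s - r t| ≤ Lr * |s - t|)
    {ε : ℝ} (hε : 0 ≤ ε) {η : ℝ} (hη : η + (Lc + Lr) * ε ≤ 0) {rd : ℝ} (hrd : 0 < rd)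
    {S T Y U : Set E} (hU : IsOpen U) {cS cT cY : E} {rS rT rY : ℝ}
    (hSball : closedBall cS rS ⊆ S) (hTball : closedBall cT rT ⊆ T) (hYball : closedBall cY rY ⊆ Y)
    (hcS : c 0 = cS) (hrS : r 0 = rS) (hcT : c tc = cT) (hrT : r tc = rT)
    {F : Set ℝ} (hF : F ⊆ Icc 0 tc) (hdense : ∀ t ∈ Icc 0 tc, ∃ s ∈ F, |t - s| ≤ ε)
    (hsampleY : ∀ s ∈ F, ‖c s - cY‖ + r s - rY ≤ η)
    (hsampleRadius : ∀ s ∈ F, -r s + rd ≤ η)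
    (hsampleU : ∀ s ∈ F, -infDist (c s) U + r s ≤ η) :
    (∀ t ∈ Icc 0 tc, rd ≤ r t ∧ 0 < r t) ∧
    closedBall (c 0) (r 0) ⊆ S ∧
    closedBall (c tc) (r tc) ⊆ T ∧
    (∀ t ∈ Icc 0 tc, closedBall (c t) (r t) ⊆ Y \ U) := by
  lift Lc to ℝ≥0 using hLc
  lift Lr to ℝ≥0 using hLr
  lift ε to ℝ≥0 using hε
  simp only [← dist_eq_norm, ← Real.dist_eq] at hLipc hLipr hdense hsampleY
  have hc : LipschitzOnWith Lc c (Icc 0 tc) := .of_dist_le_mul hLipc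
  have hr : LipschitzOnWith Lr r (Icc 0 tc) := .of_dist_le_mul hLipr
  have hcover : IsCover ε (Icc 0 tc) F :=
    .of_subset_iUnion_closedBall fun t ht ↦ mem_iUnion₂.2 (by simpa using hdense t ht)
  have le_of_sample {f : ℝ → ℝ} {b : ℝ} (hf : LipschitzOnWith (Lc + Lr) f (Icc 0 tc))
      (hsample : ∀ s ∈ F, f s ≤ b + η) : ∀ t ∈ Icc 0 tc, f t ≤ b := fun t ht ↦ by
    have hft := le_add_mul_of_isCover_of_lipschitzOnWith hf hF hcover hsample ht
    push_cast at hft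
    linarith
  have hnegr : LipschitzOnWith (Lc + Lr) (fun t ↦ -r t) (Icc 0 tc) := hr.neg.weaken le_add_self
  have hradius : ∀ t ∈ Icc 0 tc, rd ≤ r t := fun t ht ↦ neg_le_neg_iff.1 <|
    le_of_sample hnegr (fun s hs ↦ by linarith [hsampleRadius s hs]) t ht
  have hdistY : ∀ t ∈ Icc 0 tc, dist (c t) cY + r t ≤ rY :=
    le_of_sample (lipschitzOnWith_dist_add hc hr cY) fun s hs ↦ by linarith [hsampleY s hs]
  have hinfDistU : ∀ t ∈ Icc 0 tc, -infDist (c t) U + r t ≤ 0 :=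
    le_of_sample (lipschitzOnWith_neg_infDist_add hc hr U) fun s hs ↦ by linarith [hsampleU s hs]
  have hpos : ∀ t ∈ Icc 0 tc, 0 < r t := fun t ht ↦ hrd.trans_le (hradius t ht)
  refine ⟨fun t ht ↦ ⟨hradius t ht, hpos t ht⟩, hcS ▸ hrS ▸ hSball,
    hcT ▸ hrT ▸ hTball, fun t ht ↦ subset_sdiff.2 ⟨?_, ?_⟩⟩
  · exact (closedBall_subset_closedBall' (by linarith [hdistY t ht])).trans hYball
  · exact disjoint_closedBall_of_le_infDist hU (hpos t ht).ne' (by linarith [hinfDistU t ht])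

end NormedSpace

/-- Theorem 3.4 specialized to a static open unsafe set: a tube satisfying the
sampled constraints with margin ηh + (Lc + Lr)·ε ≤ 0 is a valid STT over the
whole continuous horizon. -/
theorem pinstt_validity
    (n : ℕ) (hn : 1 ≤ n) (tc : ℝ) (htc : 0 < tc)
    (c : ℝ → EuclideanSpace ℝ (Fin n)) (r : ℝ → ℝ)
    (Lc Lr : ℝ) (hLc : 0 ≤ Lc) (hLr : 0 ≤ Lr)
    (hLipc : ∀ s ∈ Icc (0:ℝ) tc, ∀ t ∈ Icc (0:ℝ) tc, ‖c s - c t‖ ≤ Lc * |s - t|)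
    (hLipr : ∀ s ∈ Icc (0:ℝ) tc, ∀ t ∈ Icc (0:ℝ) tc, |r s - r t| ≤ Lr * |s - t|)
    (ε : ℝ) (hε : 0 ≤ ε) (ηh : ℝ) (hη : ηh + (Lc + Lr) * ε ≤ 0)
    (rd : ℝ) (hrd : 0 < rd)
    (S T Y : Set (EuclideanSpace ℝ (Fin n)))
    (U : Set (EuclideanSpace ℝ (Fin n))) (hU : IsOpen U)
    (cS cT cY : EuclideanSpace ℝ (Fin n)) (rS rT rY : ℝ)
    (hrS : 0 < rS) (hrT : 0 < rT) (hrY : 0 < rY)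
    (hSball : closedBall cS rS ⊆ S)
    (hTball : closedBall cT rT ⊆ T)
    (hYball : closedBall cY rY ⊆ Y)
    (ha1 : c 0 = cS) (ha2 : r 0 = rS)
    (hb1 : c tc = cT) (hb2 : r tc = rT)
    (F : Set ℝ) (hF : F ⊆ Icc (0:ℝ) tc)
    (hdense : ∀ t ∈ Icc (0:ℝ) tc, ∃ s ∈ F, |t - s| ≤ ε)
    (hc : ∀ s ∈ F, ‖c s - cY‖ + r s - rY ≤ ηh)
    (hd : ∀ s ∈ F, -r s + rd ≤ ηh)
    (he : ∀ s ∈ F, -infDist (c s) U + r s ≤ ηh) :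
    (∀ t ∈ Icc (0:ℝ) tc, rd ≤ r t ∧ 0 < r t) ∧
    closedBall (c 0) (r 0) ⊆ S ∧
    closedBall (c tc) (r tc) ⊆ T ∧
    (∀ t ∈ Icc (0:ℝ) tc, closedBall (c t) (r t) ⊆ Y \ U) := by
  exact pinstt_validity_general hLc hLr hLipc hLipr hε hη hrd hU hSball hTball hYball
    ha1 ha2 hb1 hb2 hF hdense hc hd he
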